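/- Let q₁, q₂ be distinct points on the unit circle and Φ_q(x) = ln|x−q₁| + ln|x−q₂|. Then the renormalized energy W(q₁,q₂) := lim_{ρ→0} ( (1/2)∫_{Ω_ρ} |∇Φ_q|² dx − π ln(1/ρ) ) over Ω_ρ = B₁(0) minus the two half-discs of radius ρ around q₁ and q₂ equals −π ln|q₁ − q₂|. -/

import Mathlib

/-!
Write `a = x - q₁`, `b = x - q₂`. Then `|∇Φ|² = |a|⁻² + |b|⁻² + 2 (a·b)/(|a|²|b|²)`, and the three
terms are integrated separately, after identifying the plane with `ℂ` by an isometry.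

*Self-energies.* In polar coordinates centred at `q₁`, the unit disc is `{r < 2 cos θ}`, so the
integral of `|a|⁻²` outside `B_ρ(q₁)` is `∫ (max (log ρ) (log (2 cos θ)) - log ρ) dθ` over
`(-π/2, π/2)` (`integral_centre_eq`). Since `∫ log (2 cos θ) dθ = 0`, dominated convergence gives
`π log (1/ρ) + o(1)` (`tendsto_centre`). Removing the small ball around the other point costs only
`O(ρ²)` (`tendsto_far_ball`).

*Interaction.* The cross term is the real part of `1/(z - p) · conj (1/(z - q))`, which is integrable
on the whole disc. On the circle `|z| = r < 1` one has `conj z = r²/z`, so its angular integral is a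
Cauchy integral, equal to `2π w/(1 - r² w)` with `w = conj p · q` (`integral_cross_circle`).
Multiplying by `r` and integrating over `(0, 1)` gives `-π log |1 - w| = -π log |p - q|`
(`integral_cross`).

The sum of the halves of the self-energies cancels `π log (1/ρ)` and the interaction is the limit.
This explicit computation replaces the integration by parts over the punctured disc.
-/


open Set Real Filter MeasureTheory

noncomputable section

abbrev E2 := EuclideanSpace ℝ (Fin 2)

open scoped ComplexConjugate

/-! ### Polar coordinates and Fubini -/

/-- Integrability is preserved under passage to polar coordinates, as Fubini's theorem requires. -/
theorem polar_integrableOn {F : Type*} [NormedAddCommGroup F] [NormedSpace ℝ F]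
    {f : ℂ → F} (hf : Integrable f) :
    IntegrableOn (fun p : ℝ × ℝ => p.1 • f (Complex.polarCoord.symm p))
      (Ioi 0 ×ˢ Ioo (-π) π) := by
  have h1 : Integrable (fun p : ℝ × ℝ => f (Complex.measurableEquivRealProd.symm p)) :=
    (Complex.volume_preserving_equiv_real_prod.symm).integrable_comp_of_integrable hf
  have h2 := (integrableOn_image_iff_integrableOn_abs_det_fderiv_smul volume
    polarCoord.open_target.measurableSet
    (fun p _ => (hasFDerivAt_polarCoord_symm p).hasFDerivWithinAt)
    polarCoord.symm.injOn (fun p : ℝ × ℝ => f (Complex.measurableEquivRealProd.symm p))).1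
    h1.integrableOn
  refine h2.congr_fun (fun p hp => ?_) polarCoord.open_target.measurableSet
  have : 0 < p.1 := hp.1
  simp only [det_fderivPolarCoordSymm, abs_of_pos this]
  rfl

theorem integral_polar {F : Type*} [NormedAddCommGroup F] [NormedSpace ℝ F] [CompleteSpace F]
    {f : ℂ → F} (hf : Integrable f) :
    ∫ z, f z = ∫ r in Ioi (0 : ℝ), ∫ θ in Ioo (-π) π, r • f (Complex.polarCoord.symm (r, θ)) := by
  rw [← Complex.integral_comp_polarCoord_symm, polarCoord_target, Measure.volume_eq_prod]
  exact setIntegral_prod _ (polar_integrableOn hf)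

theorem integral_polar_swap {F : Type*} [NormedAddCommGroup F] [NormedSpace ℝ F] [CompleteSpace F]
    {f : ℂ → F} (hf : Integrable f) :
    ∫ z, f z = ∫ θ in Ioo (-π) π, ∫ r in Ioi (0 : ℝ), r • f (Complex.polarCoord.symm (r, θ)) := by
  rw [integral_polar hf]
  refine integral_integral_swap ?_
  have := polar_integrableOn hf
  rw [IntegrableOn, Measure.volume_eq_prod, ← Measure.prod_restrict] at this
  exact this

/-! ### The energy of a single boundary singularity -/

/-- The isometry `u ↦ p - p u` carries `1` to `0` and `0` to `p`; it moves the singularity `p` to the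
origin and the unit disc to the disc centred at `1`. -/
theorem integral_affine_rotation {F : Type*} [NormedAddCommGroup F] [NormedSpace ℝ F]
    (f : ℂ → F) {p : ℂ} (hp : ‖p‖ = 1) : ∫ u, f (p - p * u) = ∫ z, f z := by
  rw [← integral_sub_left_eq_self f volume p]
  have := (rotation (⟨p, mem_sphere_zero_iff_norm.2 hp⟩ : Circle)).measurePreserving.integral_comp
    (rotation _).toHomeomorph.measurableEmbedding (fun w => f (p - w))
  exact this

theorem integral_centre {p : ℂ} (hp : ‖p‖ = 1) (ρ : ℝ) :
    ∫ z in Metric.ball (0 : ℂ) 1 \ Metric.ball p ρ, (‖z - p‖ ^ 2)⁻¹ =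
      ∫ u in Metric.ball (1 : ℂ) 1 \ Metric.ball 0 ρ, (‖u‖ ^ 2)⁻¹ := by
  rw [← integral_indicator (by measurability), ← integral_indicator (by measurability),
    ← integral_affine_rotation _ hp]
  refine integral_congr_ae (.of_forall fun u => ?_)
  classical
  simp only [Set.indicator_apply]
  have h1 : ‖p - p * u‖ = ‖u - 1‖ := by
    rw [← mul_one_sub, norm_mul, hp, one_mul, norm_sub_rev]
  simp [dist_eq_norm, h1, hp]

/-- The ray of angle `θ` meets the disc centred at `1` in `0 < r < 2 cos θ`. -/
theorem inner_radial {ρ : ℝ} (hρ : 0 < ρ) (θ : ℝ) :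
    ∫ r in Ioi (0 : ℝ), r • (Metric.ball (1 : ℂ) 1 \ Metric.ball 0 ρ).indicator
      (fun u => (‖u‖ ^ 2)⁻¹) (Complex.polarCoord.symm (r, θ)) =
    if ρ < 2 * cos θ then log (2 * cos θ) - log ρ else 0 := by
  have key : ∀ r ∈ Ioi (0 : ℝ), r • (Metric.ball (1 : ℂ) 1 \ Metric.ball 0 ρ).indicator
      (fun u => (‖u‖ ^ 2)⁻¹) (Complex.polarCoord.symm (r, θ)) =
      (Ico ρ (2 * cos θ)).indicator (fun r => r⁻¹) r := by
    intro r hr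
    have hr : 0 < r := hr
    have hn : ‖Complex.polarCoord.symm (r, θ)‖ = r := by
      rw [Complex.norm_polarCoord_symm, abs_of_pos hr]
    have hm : Complex.polarCoord.symm (r, θ) ∈ Metric.ball (1 : ℂ) 1 \ Metric.ball 0 ρ ↔
        r ∈ Ico ρ (2 * cos θ) := by
      have h1 : ‖Complex.polarCoord.symm (r, θ) - 1‖ < 1 ↔ r < 2 * cos θ := by
        rw [← sq_lt_one_iff₀ (norm_nonneg _), Complex.sq_norm, Complex.normSq_apply]
        simp only [Complex.polarCoord_symm_apply]
        simp [-Complex.ofReal_cos, -Complex.ofReal_sin]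
        have : (r * cos θ - 1) * (r * cos θ - 1) + r * sin θ * (r * sin θ) =
            1 + r * (r - 2 * cos θ) := by
          linear_combination r ^ 2 * (sin_sq_add_cos_sq θ)
        rw [this]
        constructor
        · intro h; nlinarith
        · intro h; nlinarith
      rw [Set.mem_sdiff, mem_ball_iff_norm, mem_ball_iff_norm, sub_zero, hn, h1, mem_Ico, not_lt,
        and_comm]
    by_cases h : r ∈ Ico ρ (2 * cos θ)
    · rw [indicator_of_mem h, indicator_of_mem (hm.2 h), hn, smul_eq_mul]
      field_simp
    · rw [indicator_of_notMem h, indicator_of_notMem (mt hm.1 h), smul_zero]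
  rw [setIntegral_congr_fun measurableSet_Ioi key, setIntegral_indicator measurableSet_Ico,
    inter_eq_self_of_subset_right (fun r hr => mem_Ioi.2 (hρ.trans_le hr.1))]
  split_ifs with h
  · rw [integral_Ico_eq_integral_Ioc, ← intervalIntegral.integral_of_le h.le,
      integral_inv_of_pos hρ (hρ.trans h), log_div (hρ.trans h).ne' hρ.ne']
  · rw [Ico_eq_empty h]; simp

theorem integrableOn_centre {ρ : ℝ} (hρ : 0 < ρ) (p q : ℂ) :
    IntegrableOn (fun u : ℂ => (‖u - p‖ ^ 2)⁻¹) (Metric.ball q 1 \ Metric.ball p ρ) := by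
  refine IntegrableOn.of_bound (C := (ρ ^ 2)⁻¹)
    ((measure_mono sdiff_subset).trans_lt measure_ball_lt_top) (by fun_prop) ?_
  refine (ae_restrict_iff' (by measurability)).2 (.of_forall fun u hu => ?_)
  have : ρ ≤ ‖u - p‖ := by simpa [dist_eq_norm] using hu.2
  rw [norm_of_nonneg (by positivity)]
  gcongr

/-- The self-energy outside `B_ρ(0)`, in the disc centred at `1`. The maximum encodes the truncation:
it equals `log ρ` on the rays where `2 cos θ ≤ ρ`. -/
theorem integral_centre_eq {ρ : ℝ} (hρ : 0 < ρ) :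
    ∫ u in Metric.ball (1 : ℂ) 1 \ Metric.ball 0 ρ, (‖u‖ ^ 2)⁻¹ =
      ∫ θ in Ioo (-(π / 2)) (π / 2), (max (log ρ) (log (2 * cos θ)) - log ρ) := by
  have hi := integrableOn_centre hρ 0 1
  simp only [sub_zero] at hi
  rw [← integral_indicator (by measurability), integral_polar_swap
    ((integrable_indicator_iff (by measurability)).2 hi)]
  simp_rw [inner_radial hρ]
  rw [setIntegral_eq_of_subset_of_forall_sdiff_eq_zero measurableSet_Ioo
    (s := Ioo (-(π / 2)) (π / 2))]
  · refine setIntegral_congr_fun measurableSet_Ioo fun θ hθ => ?_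
    have hc : 0 < cos θ := cos_pos_of_mem_Ioo hθ
    split_ifs with h
    · rw [max_eq_right (log_le_log hρ h.le)]
    · rw [max_eq_left (log_le_log (by positivity) (not_lt.1 h)), sub_self]
  · exact Ioo_subset_Ioo (by linarith [pi_pos]) (by linarith [pi_pos])
  · rintro θ ⟨⟨h1, h2⟩, h3⟩
    have : cos θ ≤ 0 := by
      rw [mem_Ioo, not_and_or, not_lt, not_lt] at h3
      rcases h3 with h3 | h3
      · rw [← cos_neg]
        exact cos_nonpos_of_pi_div_two_le_of_le (by linarith) (by linarith)
      · exact cos_nonpos_of_pi_div_two_le_of_le h3 (by linarith)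
    rw [if_neg (by linarith)]

theorem log_two_cos_integrable :
    IntegrableOn (fun θ => log (2 * cos θ)) (Ioo (-(π / 2)) (π / 2)) := by
  have h : IntegrableOn (log ∘ cos) (Ioo (-(π / 2)) (π / 2)) :=
    (intervalIntegrable_iff_integrableOn_Ioo_of_le (by linarith [pi_pos])).1
      intervalIntegrable_log_cos
  refine ((integrable_const (log 2)).add h).congr ?_
  refine (ae_restrict_iff' measurableSet_Ioo).2 (.of_forall fun θ hθ => ?_)
  have hc : 0 < cos θ := cos_pos_of_mem_Ioo hθ
  simp [log_mul two_ne_zero hc.ne']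

theorem integral_log_two_cos : ∫ θ in Ioo (-(π / 2)) (π / 2), log (2 * cos θ) = 0 := by
  have h : IntegrableOn (log ∘ cos) (Ioo (-(π / 2)) (π / 2)) :=
    (intervalIntegrable_iff_integrableOn_Ioo_of_le (by linarith [pi_pos])).1
      intervalIntegrable_log_cos
  have h1 : ∫ θ in Ioo (-(π / 2)) (π / 2), log (2 * cos θ) =
      ∫ θ in Ioo (-(π / 2)) (π / 2), (log 2 + log (cos θ)) := by
    refine setIntegral_congr_fun measurableSet_Ioo fun θ hθ => ?_
    have hc : 0 < cos θ := cos_pos_of_mem_Ioo hθ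
    exact log_mul two_ne_zero hc.ne'
  rw [h1, integral_add (g := fun θ => log (cos θ)) (integrable_const _) h, ← integral_Ioc_eq_integral_Ioo,
    ← integral_Ioc_eq_integral_Ioo, ← intervalIntegral.integral_of_le (by linarith [pi_pos]),
    ← intervalIntegral.integral_of_le (by linarith [pi_pos])]
  have h2 : ∫ θ in (-(π / 2))..(π / 2), log (cos θ) = - log 2 * π := by
    rw [← integral_log_sin_zero_pi]
    have := intervalIntegral.integral_comp_add_right (a := -(π / 2)) (b := π / 2)
      (fun x => log (sin x)) (π / 2)
    simp only [sin_add_pi_div_two] at this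
    rw [this]; congr 1 <;> ring
  rw [h2, intervalIntegral.integral_const, smul_eq_mul]; ring

/-- Self-energy of one boundary singularity: `π log (1/ρ) + o(1)`. -/
theorem tendsto_centre {p : ℂ} (hp : ‖p‖ = 1) :
    Tendsto (fun ρ : ℝ =>
      (∫ z in Metric.ball (0 : ℂ) 1 \ Metric.ball p ρ, (‖z - p‖ ^ 2)⁻¹) - π * log (1 / ρ))
      (nhdsWithin 0 (Ioi 0)) (nhds 0) := by
  have h0 : Tendsto (fun ρ : ℝ => ∫ θ in Ioo (-(π / 2)) (π / 2), max (log ρ) (log (2 * cos θ)))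
      (nhdsWithin 0 (Ioi 0)) (nhds 0) := by
    nth_rewrite 3 [← integral_log_two_cos]
    refine tendsto_integral_filter_of_dominated_convergence (fun θ => |log (2 * cos θ)|) ?_ ?_
      log_two_cos_integrable.abs ?_
    · exact .of_forall fun ρ => by
        apply Measurable.aestronglyMeasurable; fun_prop
    · filter_upwards [Ioo_mem_nhdsGT one_pos] with ρ hρ
      refine .of_forall fun θ => ?_
      have : log ρ ≤ 0 := log_nonpos hρ.1.le hρ.2.le
      rw [norm_eq_abs, abs_le]
      exact ⟨(neg_abs_le _).trans (le_max_right _ _),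
        max_le (this.trans (abs_nonneg _)) (le_abs_self _)⟩
    · refine .of_forall fun θ => tendsto_const_nhds.congr' ?_
      filter_upwards [tendsto_log_nhdsGT_zero.eventually_le_atBot (log (2 * cos θ))] with ρ h
      rw [max_eq_right h]
  refine h0.congr' ?_
  filter_upwards [self_mem_nhdsWithin] with ρ hρ
  have hρ : 0 < ρ := hρ
  rw [integral_centre hp, integral_centre_eq hρ, integral_sub]
  · have : (π / 2 - -(π / 2)) = π := by ring
    simp [this, pi_pos.le]
  · refine (log_two_cos_integrable.abs.add (integrable_const |log ρ|)).mono' ?_ ?_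
    · apply Measurable.aestronglyMeasurable; fun_prop
    · refine .of_forall fun θ => ?_
      rw [norm_eq_abs]
      exact (abs_max_le_max_abs_abs).trans (max_le (by simp) (by simp))
  · exact integrable_const _

/-! ### The interaction of two boundary singularities -/

theorem integrableOn_inv_norm (p : ℂ) (hp : ‖p‖ = 1) :
    IntegrableOn (fun z : ℂ => ‖z - p‖⁻¹) (Metric.ball 0 1) := by
  have h : IntegrableOn (fun z : ℂ => ‖z‖⁻¹) (Metric.ball 0 2) := by
    rw [integrableOn_fun_norm_addHaar volume (f := fun r : ℝ => r⁻¹) (r := 2)]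
    refine (integrableOn_const (C := (1 : ℝ)) (by simp)).congr_fun (fun r hr => ?_)
      measurableSet_Ioo
    simp [Complex.finrank_real_complex, hr.1.ne']
  have h2 := ((integrable_indicator_iff (by measurability)).2 h).comp_sub_right p
  refine h2.integrableOn.congr_fun (fun z hz => ?_) (by measurability)
  refine indicator_of_mem ?_ _
  rw [mem_ball_zero_iff] at hz ⊢
  linarith [norm_sub_le z p]

/-- Away from each other, the two singularities of order one do not multiply: this is the triangle
inequality `|p - q| ≤ |z - p| + |z - q|` divided through. It also
holds at `z = p` and `z = q`, where `0⁻¹ = 0` makes the left side vanish. -/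
theorem cross_bound {p q z : ℂ} (hne : p ≠ q) :
    ‖z - p‖⁻¹ * ‖z - q‖⁻¹ ≤ ‖p - q‖⁻¹ * (‖z - p‖⁻¹ + ‖z - q‖⁻¹) := by
  have hd : 0 < ‖p - q‖ := norm_pos_iff.2 (sub_ne_zero.2 hne)
  rcases eq_or_ne z p with rfl | hp
  · simp; positivity
  rcases eq_or_ne z q with rfl | hq
  · simp; positivity
  have ha : 0 < ‖z - p‖ := norm_pos_iff.2 (sub_ne_zero.2 hp)
  have hb : 0 < ‖z - q‖ := norm_pos_iff.2 (sub_ne_zero.2 hq)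
  have ht : ‖p - q‖ ≤ ‖z - q‖ + ‖z - p‖ := by
    have := norm_sub_le (z - q) (z - p)
    simpa using this
  have e : ‖p - q‖⁻¹ * (‖z - p‖⁻¹ + ‖z - q‖⁻¹) =
      ‖z - p‖⁻¹ * ‖z - q‖⁻¹ * ((‖z - q‖ + ‖z - p‖) / ‖p - q‖) := by
    field_simp
  rw [e]
  exact le_mul_of_one_le_right (by positivity) ((one_le_div hd).2 ht)

/-- `∂ log(z - p)` paired with `∂ log(z - q)`; its real part is `∇ log|z - p| · ∇ log|z - q|`. -/
def crossKernel (p q z : ℂ) : ℂ := (z - p)⁻¹ * conj (z - q)⁻¹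

theorem integrableOn_cross {p q : ℂ} (hp : ‖p‖ = 1) (hq : ‖q‖ = 1) (hne : p ≠ q) :
    IntegrableOn (crossKernel p q) (Metric.ball 0 1) := by
  refine (((integrableOn_inv_norm p hp).add (integrableOn_inv_norm q hq)).const_mul
    ‖p - q‖⁻¹).mono' ?_ (.of_forall fun z => ?_)
  · have : Measurable (crossKernel p q) := by
      unfold crossKernel
      refine Measurable.mul (by fun_prop) (Complex.continuous_conj.measurable.comp (by fun_prop))
    exact this.aestronglyMeasurable
  · rw [crossKernel, norm_mul, RCLike.norm_conj, norm_inv, norm_inv]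
    exact cross_bound hne

/-- Since `conj z = r² / z` on `|z| = r`, the angular integral is a Cauchy integral whose only pole
inside the circle is `r² q`. -/
theorem integral_cross_circle {p q : ℂ} (hp : ‖p‖ = 1) (hq : ‖q‖ = 1) {r : ℝ} (hr : 0 < r)
    (hr1 : r < 1) :
    ∫ θ in Ioo (-π) π, crossKernel p q (Complex.polarCoord.symm (r, θ)) =
      2 * π * (conj p * q / (1 - r ^ 2 * (conj p * q))) := by
  have hpc : p * conj p = 1 := by simp [Complex.mul_conj, Complex.normSq_eq_norm_sq, hp]
  have hqc : q * conj q = 1 := by simp [Complex.mul_conj, Complex.normSq_eq_norm_sq, hq]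
  have hq0 : q ≠ 0 := by rintro rfl; simp at hq
  have hr0 : (r : ℂ) ≠ 0 := by exact_mod_cast hr.ne'
  have hval : ∀ θ : ℝ, Complex.polarCoord.symm (r, θ) = circleMap 0 r θ := by
    intro θ; simp [circleMap, Complex.exp_mul_I]
  simp_rw [hval]
  -- Cauchy's formula is stated over `[0, 2π]`, polar coordinates use `(-π, π)`
  have hper : Function.Periodic (fun θ : ℝ => crossKernel p q (circleMap 0 r θ)) (2 * π) :=
    fun θ => by simp only [periodic_circleMap 0 r θ]
  have hshift : ∫ θ in Ioo (-π) π, crossKernel p q (circleMap 0 r θ) =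
      ∫ θ in (0 : ℝ)..2 * π, crossKernel p q (circleMap 0 r θ) := by
    rw [← integral_Ioc_eq_integral_Ioo, ← intervalIntegral.integral_of_le (by linarith [pi_pos])]
    have := hper.intervalIntegral_add_eq (-π) 0
    rw [show -π + 2 * π = π by ring, zero_add] at this
    exact this
  have hnp : ∀ z ∈ Metric.closedBall (0 : ℂ) r, z - p ≠ 0 := by
    intro z hz h
    rw [sub_eq_zero] at h
    rw [mem_closedBall_zero_iff, h, hp] at hz
    linarith
  have hC : (∮ z in C(0, r), (z - r ^ 2 * q)⁻¹ • (-(q * (z - p)⁻¹))) =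
      (2 * π * Complex.I : ℂ) • (-(q * (r ^ 2 * q - p)⁻¹)) := by
    have := DifferentiableOn.circleIntegral_sub_inv_smul (R := r) (c := 0) (w := r ^ 2 * q)
      (f := fun z => -(q * (z - p)⁻¹)) ?_ ?_
    · exact this
    · intro z hz
      have := hnp z hz
      fun_prop (disch := assumption)
    · rw [mem_ball_zero_iff, norm_mul, hq, norm_pow, Complex.norm_real, norm_of_nonneg hr.le]
      nlinarith
  have hcirc : (∮ z in C(0, r), (z - r ^ 2 * q)⁻¹ • (-(q * (z - p)⁻¹))) =
      Complex.I * ∫ θ in (0 : ℝ)..2 * π, crossKernel p q (circleMap 0 r θ) := by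
    rw [circleIntegral, ← intervalIntegral.integral_const_mul]
    refine intervalIntegral.integral_congr fun θ _ => ?_
    simp only [deriv_circleMap, smul_eq_mul, crossKernel]
    set z := circleMap 0 r θ with hz
    have hz0 : z ≠ 0 := circleMap_ne_center hr.ne'
    have hzn : ‖z‖ = r := by simp [hz, abs_of_pos hr]
    have hzz : z * conj z = r ^ 2 := by
      rw [Complex.mul_conj, Complex.normSq_eq_norm_sq, hzn]; push_cast; rfl
    have hrq : z - r ^ 2 * q ≠ 0 := by
      intro h
      have := congrArg norm (sub_eq_zero.1 h)
      rw [hzn, norm_mul, hq, norm_pow, Complex.norm_real, norm_of_nonneg hr.le] at this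
      nlinarith
    have hzq : z - q ≠ 0 := by
      intro h
      have := congrArg norm (sub_eq_zero.1 h)
      rw [hzn, hq] at this
      linarith
    have hzq' : conj (z - q) ≠ 0 := (map_ne_zero _).2 hzq
    have : (conj (z - q))⁻¹ = z * (-q) * (z - r ^ 2 * q)⁻¹ := by
      have e : z - r ^ 2 * q = z * (-q) * conj (z - q) := by
        rw [map_sub]
        linear_combination q * hzz - z * hqc
      rw [e]
      field_simp
    rw [map_inv₀, this]
    simp only [circleMap, zero_add] at hz ⊢
    ring
  rw [hshift]
  have h := hcirc.symm.trans hC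
  have hpr : (r : ℂ) ^ 2 * q - p ≠ 0 := by
    intro h
    have := congrArg norm (sub_eq_zero.1 h)
    rw [norm_mul, hp, hq, norm_pow, Complex.norm_real, norm_of_nonneg hr.le] at this
    nlinarith
  have hw : 1 - (r : ℂ) ^ 2 * (conj p * q) ≠ 0 := by
    have : p * (1 - (r : ℂ) ^ 2 * (conj p * q)) = -(r ^ 2 * q - p) := by
      linear_combination (- r ^ 2 * q) * hpc
    intro h0
    rw [h0, mul_zero, eq_comm, neg_eq_zero] at this
    exact hpr this
  have h' : -(q * ((r : ℂ) ^ 2 * q - p)⁻¹) = conj p * q / (1 - r ^ 2 * (conj p * q)) := by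
    have eA : (r : ℂ) ^ 2 * q - p = -(p * (1 - r ^ 2 * (conj p * q))) := by
      linear_combination (-r ^ 2 * q) * hpc
    rw [eq_div_iff hw, eA, inv_neg, mul_inv, ← eq_inv_of_mul_eq_one_right hpc]
    linear_combination q * conj p * (inv_mul_cancel₀ hw)
  rw [h', smul_eq_mul] at h
  refine mul_left_cancel₀ Complex.I_ne_zero (h.trans ?_)
  ring

theorem normSq_gap {w : ℂ} (hw : ‖w‖ = 1) (r : ℝ) :
    Complex.normSq (1 - r ^ 2 * w) = 1 - 2 * r ^ 2 * w.re + r ^ 4 := by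
  have h : w.re * w.re + w.im * w.im = 1 := by
    rw [← Complex.normSq_apply, Complex.normSq_eq_norm_sq, hw]; norm_num
  rw [← Complex.ofReal_pow, Complex.normSq_apply]
  simp [-Complex.ofReal_pow]
  linear_combination r ^ 4 * h

theorem re_div_gap {w : ℂ} (hw : ‖w‖ = 1) (r : ℝ) :
    (w / (1 - r ^ 2 * w)).re = (w.re - r ^ 2) / (1 - 2 * r ^ 2 * w.re + r ^ 4) := by
  have h : w.re * w.re + w.im * w.im = 1 := by
    rw [← Complex.normSq_apply, Complex.normSq_eq_norm_sq, hw]; norm_num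
  rw [Complex.div_re, normSq_gap hw, ← Complex.ofReal_pow, ← add_div]
  congr 1
  simp [-Complex.ofReal_pow]
  linear_combination (-r ^ 2) * h

/-- `|1 - r² w|²` never vanishes for `w` on the unit circle different from `1`; in particular not at
`r = 1`, which makes the radial integrand smooth on `[0, 1]`. -/
theorem gap_pos {w : ℂ} (hw : ‖w‖ = 1) (hw1 : w ≠ 1) (r : ℝ) :
    0 < 1 - 2 * r ^ 2 * w.re + r ^ 4 := by
  have hre : w.re < 1 := by
    refine lt_of_le_of_ne (hw ▸ Complex.re_le_norm w) fun h => hw1 ?_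
    have h2 : w.re * w.re + w.im * w.im = 1 := by
      rw [← Complex.normSq_apply, Complex.normSq_eq_norm_sq, hw]; norm_num
    have : w.im = 0 := by rw [h] at h2; nlinarith
    exact Complex.ext (by simpa using h) (by simpa using this)
  have hre' : -1 ≤ w.re := by
    have := Complex.abs_re_le_norm w
    rw [hw, abs_le] at this; exact this.1
  rcases eq_or_ne r 0 with rfl | h
  · norm_num
  · have : 0 < r ^ 2 := by positivity
    nlinarith [sq_nonneg (r ^ 2 - 1)]

/-- The primitive is `-π log |1 - r² w|`. -/
theorem integral_radial {w : ℂ} (hw : ‖w‖ = 1) (hw1 : w ≠ 1) :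
    ∫ r in (0 : ℝ)..1, r * (2 * π * ((w.re - r ^ 2) / (1 - 2 * r ^ 2 * w.re + r ^ 4))) =
      -π * log ‖1 - w‖ := by
  have hd : ∀ r ∈ uIcc (0 : ℝ) 1, HasDerivAt
      (fun r : ℝ => -(π / 2) * log (1 - 2 * r ^ 2 * w.re + r ^ 4))
      (r * (2 * π * ((w.re - r ^ 2) / (1 - 2 * r ^ 2 * w.re + r ^ 4)))) r := by
    intro r _
    have hg := gap_pos hw hw1 r
    have h1 : HasDerivAt (fun r : ℝ => 1 - 2 * r ^ 2 * w.re + r ^ 4)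
        (-(4 * r * w.re) + 4 * r ^ 3) r := by
      refine ((((((hasDerivAt_pow 2 r).const_mul 2).mul_const w.re).const_sub 1)).add
        (hasDerivAt_pow 4 r)).congr_deriv ?_
      push_cast; ring
    refine ((h1.log hg.ne').const_mul (-(π / 2))).congr_deriv ?_
    ring
  rw [intervalIntegral.integral_eq_sub_of_hasDerivAt hd]
  · have := normSq_gap hw 1
    rw [Complex.normSq_eq_norm_sq] at this
    rw [← this]
    simp
    ring
  · refine ContinuousOn.intervalIntegrable fun r _ => ContinuousAt.continuousWithinAt ?_
    have := (gap_pos hw hw1 r).ne'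
    fun_prop (disch := assumption)

/-- Interaction energy of the two singularities. -/
theorem integral_cross {p q : ℂ} (hp : ‖p‖ = 1) (hq : ‖q‖ = 1) (hne : p ≠ q) :
    ∫ z in Metric.ball (0 : ℂ) 1, (crossKernel p q z).re = -π * log ‖p - q‖ := by
  have hpc : p * conj p = 1 := by simp [Complex.mul_conj, Complex.normSq_eq_norm_sq, hp]
  set w := conj p * q with hwdef
  have hw : ‖w‖ = 1 := by simp [hwdef, hp, hq]
  have hpw : p - q = p * (1 - w) := by rw [hwdef]; linear_combination q * hpc
  have hw1 : w ≠ 1 := by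
    intro h; rw [h, sub_self, mul_zero, sub_eq_zero] at hpw; exact hne hpw
  have hI := integrableOn_cross hp hq hne
  have hre : ∫ z in Metric.ball (0 : ℂ) 1, (crossKernel p q z).re =
      (∫ z in Metric.ball (0 : ℂ) 1, crossKernel p q z).re := integral_re hI
  rw [hre, ← integral_indicator (by measurability),
    integral_polar ((integrable_indicator_iff (by measurability)).2 hI)]
  have key : ∀ r ∈ Ioi (0 : ℝ), ∫ θ in Ioo (-π) π,
      r • (Metric.ball (0 : ℂ) 1).indicator (crossKernel p q) (Complex.polarCoord.symm (r, θ)) =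
      (Iio 1).indicator (fun r : ℝ => r * (2 * π * (w / (1 - r ^ 2 * w)))) r := by
    intro r hr
    have hr : 0 < r := hr
    have hm : ∀ θ, Complex.polarCoord.symm (r, θ) ∈ Metric.ball (0 : ℂ) 1 ↔ r < 1 := by
      intro θ
      rw [mem_ball_zero_iff, Complex.norm_polarCoord_symm, abs_of_pos hr]
    by_cases h : r < 1
    · rw [indicator_of_mem (mem_Iio.2 h), ← integral_cross_circle hp hq hr h,
        ← integral_const_mul]
      congr 1; funext θ
      rw [indicator_of_mem ((hm θ).2 h), Complex.real_smul]
    · rw [indicator_of_notMem (by simpa using h)]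
      have : ∀ θ, r • (Metric.ball (0 : ℂ) 1).indicator (crossKernel p q)
          (Complex.polarCoord.symm (r, θ)) = 0 := fun θ => by
        rw [indicator_of_notMem (mt (hm θ).1 h), smul_zero]
      simp only [this, integral_zero]
  have hint : IntegrableOn (fun r : ℝ => (r : ℂ) * (2 * π * (w / (1 - r ^ 2 * w)))) (Ioo 0 1) := by
    refine (ContinuousOn.integrableOn_compact (isCompact_Icc (a := (0 : ℝ)) (b := 1)) ?_).mono_set
      Ioo_subset_Icc_self
    intro r _
    have : 1 - (r : ℂ) ^ 2 * w ≠ 0 := by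
      rw [← Complex.normSq_pos, normSq_gap hw]; exact gap_pos hw hw1 r
    refine ContinuousAt.continuousWithinAt ?_
    fun_prop (disch := assumption)
  rw [setIntegral_congr_fun measurableSet_Ioi key, setIntegral_indicator measurableSet_Iio,
    Ioi_inter_Iio]
  have hre2 : (∫ r in Ioo (0 : ℝ) 1, (r : ℂ) * (2 * π * (w / (1 - r ^ 2 * w)))).re =
    ∫ r in Ioo (0 : ℝ) 1, ((r : ℂ) * (2 * π * (w / (1 - r ^ 2 * w)))).re := (integral_re hint).symm
  rw [hre2, hpw, norm_mul, hp, one_mul, ← integral_radial hw hw1,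
    intervalIntegral.integral_of_le zero_le_one, integral_Ioc_eq_integral_Ioo]
  congr 1; funext r
  rw [← re_div_gap hw, Complex.re_ofReal_mul, mul_assoc (2 : ℂ), ← Complex.ofReal_ofNat,
    Complex.re_ofReal_mul, Complex.re_ofReal_mul, mul_assoc]

/-! ### The expansion of the energy in the complex plane -/

theorem tendsto_setIntegral_punctured (p q : ℂ) {f : ℂ → ℝ}
    (hf : IntegrableOn f (Metric.ball 0 1)) :
    Tendsto (fun ρ : ℝ => ∫ z in Metric.ball (0 : ℂ) 1 \ (Metric.ball p ρ ∪ Metric.ball q ρ), f z)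
      (nhdsWithin 0 (Ioi 0)) (nhds (∫ z in Metric.ball (0 : ℂ) 1, f z)) := by
  have h : ∀ ρ : ℝ, ∫ z in Metric.ball (0 : ℂ) 1 \ (Metric.ball p ρ ∪ Metric.ball q ρ), f z =
      ∫ z in Metric.ball (0 : ℂ) 1, (Metric.ball p ρ ∪ Metric.ball q ρ)ᶜ.indicator f z := by
    intro ρ
    rw [setIntegral_indicator (by measurability)]; rfl
  simp_rw [h]
  refine tendsto_integral_filter_of_dominated_convergence (fun z => ‖f z‖) ?_ ?_ hf.norm ?_
  · exact .of_forall fun ρ => hf.aestronglyMeasurable.indicator (by measurability)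
  · exact .of_forall fun ρ => .of_forall fun z => norm_indicator_le_norm_self _ _
  · have hpq : ∀ᵐ z ∂(volume.restrict (Metric.ball (0 : ℂ) 1)), z ∉ ({p, q} : Set ℂ) :=
      ae_restrict_of_ae ((Set.toFinite _).measure_zero volume |> measure_eq_zero_iff_ae_notMem.1)
    filter_upwards [hpq] with z hz
    have h1 : 0 < dist z p := dist_pos.2 fun h => hz (by simp [h])
    have h2 : 0 < dist z q := dist_pos.2 fun h => hz (by simp [h])
    refine tendsto_const_nhds.congr' ?_
    filter_upwards [Ioo_mem_nhdsGT (lt_min h1 h2)] with ρ hρ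
    rw [indicator_of_mem]
    have := hρ.2.trans_le (min_le_left _ _)
    have := hρ.2.trans_le (min_le_right _ _)
    simp only [mem_compl_iff, mem_union, Metric.mem_ball]
    push Not
    constructor <;> linarith

/-- Near `q` the function `|z - p|⁻²` is bounded, so a small ball around `q` contributes nothing. -/
theorem tendsto_far_ball {p q : ℂ} (hne : p ≠ q) :
    Tendsto (fun ρ : ℝ =>
      ∫ z in (Metric.ball (0 : ℂ) 1 \ Metric.ball p ρ) ∩ Metric.ball q ρ, (‖z - p‖ ^ 2)⁻¹)
      (nhdsWithin 0 (Ioi 0)) (nhds 0) := by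
  have hd : 0 < ‖p - q‖ := norm_pos_iff.2 (sub_ne_zero.2 hne)
  have hlim : Tendsto (fun ρ : ℝ => ((‖p - q‖ / 2) ^ 2)⁻¹ * (ρ ^ 2 * π))
      (nhdsWithin 0 (Ioi 0)) (nhds 0) := by
    have : Continuous (fun ρ : ℝ => ((‖p - q‖ / 2) ^ 2)⁻¹ * (ρ ^ 2 * π)) := by fun_prop
    have := this.tendsto 0
    simp only [ne_eq, OfNat.ofNat_ne_zero, not_false_eq_true, zero_pow, zero_mul, mul_zero] at this
    exact this.mono_left nhdsWithin_le_nhds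
  refine squeeze_zero_norm' ?_ hlim
  filter_upwards [Ioo_mem_nhdsGT (half_pos hd)] with ρ hρ
  have hb : ∀ z ∈ (Metric.ball (0 : ℂ) 1 \ Metric.ball p ρ) ∩ Metric.ball q ρ,
      ‖(‖z - p‖ ^ 2)⁻¹‖ ≤ ((‖p - q‖ / 2) ^ 2)⁻¹ := by
    intro z hz
    have h1 : ‖z - q‖ < ρ := by simpa [dist_eq_norm] using hz.2
    have h2 : ‖p - q‖ ≤ ‖z - q‖ + ‖z - p‖ := by
      simpa using norm_sub_le (z - q) (z - p)
    rw [norm_of_nonneg (by positivity)]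
    have := hρ.2
    gcongr
    linarith
  have hfin : volume (Metric.ball q ρ) < ⊤ := measure_ball_lt_top
  refine (norm_setIntegral_le_of_norm_le_const
    ((measure_mono inter_subset_right).trans_lt hfin) hb).trans ?_
  gcongr
  calc volume.real _ ≤ volume.real (Metric.ball q ρ) :=
        measureReal_mono inter_subset_right hfin.ne
    _ = ρ ^ 2 * π := by
        simp [measureReal_def, hρ.1.le]

theorem tendsto_self_energy {p q : ℂ} (hp : ‖p‖ = 1) (hne : p ≠ q) :
    Tendsto (fun ρ : ℝ =>
      (∫ z in Metric.ball (0 : ℂ) 1 \ (Metric.ball p ρ ∪ Metric.ball q ρ), (‖z - p‖ ^ 2)⁻¹) -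
        π * log (1 / ρ))
      (nhdsWithin 0 (Ioi 0)) (nhds 0) := by
  have := (tendsto_centre hp).sub (tendsto_far_ball hne)
  rw [sub_zero] at this
  refine this.congr' ?_
  filter_upwards [self_mem_nhdsWithin] with ρ hρ
  have hI := integrableOn_centre hρ p 0
  rw [← integral_inter_add_sdiff (t := Metric.ball q ρ) (by measurability) hI]
  simp only [sdiff_sdiff_left, sup_eq_union]
  ring

theorem tendsto_energy_complex {p q : ℂ} (hp : ‖p‖ = 1) (hq : ‖q‖ = 1) (hne : p ≠ q) :
    Tendsto (fun ρ : ℝ =>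
      (1 / 2) * (∫ z in Metric.ball (0 : ℂ) 1 \ (Metric.ball p ρ ∪ Metric.ball q ρ),
        ((‖z - p‖ ^ 2)⁻¹ + (‖z - q‖ ^ 2)⁻¹ + 2 * (crossKernel p q z).re)) - π * log (1 / ρ))
      (nhdsWithin 0 (Ioi 0)) (nhds (-π * log ‖p - q‖)) := by
  have hc : IntegrableOn (fun z => (crossKernel p q z).re) (Metric.ball 0 1) :=
    (integrableOn_cross hp hq hne).re
  have h3 := tendsto_setIntegral_punctured p q hc
  rw [integral_cross hp hq hne] at h3
  have h := (((tendsto_self_energy hp hne).add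
    (tendsto_self_energy hq hne.symm)).const_mul (1 / 2)).add h3
  rw [add_zero, mul_zero, zero_add] at h
  refine h.congr' ?_
  filter_upwards [self_mem_nhdsWithin] with ρ hρ
  have ha : IntegrableOn (fun z : ℂ => (‖z - p‖ ^ 2)⁻¹)
      (Metric.ball (0 : ℂ) 1 \ (Metric.ball p ρ ∪ Metric.ball q ρ)) :=
    (integrableOn_centre hρ p 0).mono_set (sdiff_subset_sdiff_right subset_union_left)
  have hb : IntegrableOn (fun z : ℂ => (‖z - q‖ ^ 2)⁻¹)
      (Metric.ball (0 : ℂ) 1 \ (Metric.ball p ρ ∪ Metric.ball q ρ)) :=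
    (integrableOn_centre hρ q 0).mono_set (sdiff_subset_sdiff_right subset_union_right)
  rw [integral_add (f := fun z : ℂ => (‖z - p‖ ^ 2)⁻¹ + (‖z - q‖ ^ 2)⁻¹) (ha.add hb)
    ((hc.mono_set sdiff_subset).const_mul 2), integral_add ha hb, integral_const_mul, union_comm (Metric.ball q ρ)]
  ring

/-! ### The gradient of the potential -/

theorem norm_sq_fderiv_log_add_log {E : Type*} [NormedAddCommGroup E] [InnerProductSpace ℝ E]
    {p q x : E} (hp : x ≠ p) (hq : x ≠ q) :
    ‖fderiv ℝ (fun y => log ‖y - p‖ + log ‖y - q‖) x‖ ^ 2 =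
      (‖x - p‖ ^ 2)⁻¹ + (‖x - q‖ ^ 2)⁻¹ +
        2 * (inner ℝ (x - p) (x - q) / (‖x - p‖ ^ 2 * ‖x - q‖ ^ 2)) := by
  have key : ∀ a : E, x ≠ a → HasFDerivAt (fun y => log ‖y - a‖)
      (innerSL ℝ ((‖x - a‖ ^ 2)⁻¹ • (x - a))) x := by
    intro a ha
    have hpos : 0 < ‖x - a‖ := norm_pos_iff.2 (sub_ne_zero.2 ha)
    have h := ((((hasFDerivAt_id x).sub_const a).norm_sq).log (by simpa using hpos.ne')).const_mul
      (1 / 2 : ℝ)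
    -- the square of the norm is smooth, so differentiate `½ log |y - a|²` instead
    have e : (fun y => log ‖y - a‖) = fun y => (1 / 2 : ℝ) * log (‖id y - a‖ ^ 2) := by
      funext y; rw [log_pow, id]; push_cast; ring
    rw [e]
    refine h.congr_fderiv ?_
    ext v
    simp
    ring
  have hp0 : 0 < ‖x - p‖ := norm_pos_iff.2 (sub_ne_zero.2 hp)
  have hq0 : 0 < ‖x - q‖ := norm_pos_iff.2 (sub_ne_zero.2 hq)
  have hsum : HasFDerivAt (fun y => log ‖y - p‖ + log ‖y - q‖)
      (innerSL ℝ ((‖x - p‖ ^ 2)⁻¹ • (x - p) + (‖x - q‖ ^ 2)⁻¹ • (x - q))) x := by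
    rw [map_add]; exact (key p hp).add (key q hq)
  rw [hsum.fderiv, innerSL_apply_norm, norm_add_sq_real, norm_smul, norm_smul, inner_smul_left,
    inner_smul_right]
  simp only [norm_inv, norm_pow, norm_norm, conj_trivial]
  field_simp
  ring

theorem crossKernel_re (p q z : ℂ) : (crossKernel p q z).re =
    inner ℝ (z - p) (z - q) / (‖z - p‖ ^ 2 * ‖z - q‖ ^ 2) := by
  have h : crossKernel p q z =
      ((‖z - p‖ ^ 2 * ‖z - q‖ ^ 2)⁻¹ : ℝ) * (conj (z - p) * (z - q)) := by
    rw [crossKernel, Complex.inv_def, Complex.inv_def, map_mul, Complex.conj_conj,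
      Complex.conj_ofReal, Complex.normSq_eq_norm_sq, Complex.normSq_eq_norm_sq]
    push_cast
    rw [mul_inv]; ring
  rw [h, Complex.re_ofReal_mul, Complex.inner, div_eq_inv_mul, mul_comm (z - q)]

/-- for distinct points `q₁,q₂` on the unit circle and
`Φ_q(x) = ln|x−q₁| + ln|x−q₂|`, the renormalized energy
`lim_{ρ→0⁺} ((1/2)∫_{Ω_ρ}|∇Φ_q|² − π ln(1/ρ))` over
`Ω_ρ = B₁(0) \ (B_ρ(q₁) ∪ B_ρ(q₂))` equals `−π ln|q₁ − q₂|`. -/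
theorem stmt14 (q₁ q₂ : E2) (h1 : ‖q₁‖ = 1) (h2 : ‖q₂‖ = 1) (hne : q₁ ≠ q₂) :
    Tendsto (fun ρ : ℝ =>
        (1 / 2) * (∫ x in Metric.ball (0 : E2) 1 \ (Metric.ball q₁ ρ ∪ Metric.ball q₂ ρ),
          ‖fderiv ℝ (fun y => Real.log ‖y - q₁‖ + Real.log ‖y - q₂‖) x‖ ^ 2) -
          π * Real.log (1 / ρ))
      (nhdsWithin 0 (Set.Ioi 0))
      (nhds (-π * Real.log ‖q₁ - q₂‖)) := by
  let e : ℂ ≃ₗᵢ[ℝ] E2 := Complex.orthonormalBasisOneI.repr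
  have he : MeasurePreserving e volume volume :=
    Complex.orthonormalBasisOneI.measurePreserving_repr
  obtain ⟨p, rfl⟩ := e.surjective q₁
  obtain ⟨q, rfl⟩ := e.surjective q₂
  rw [e.norm_map] at h1 h2
  rw [← map_sub, e.norm_map]
  refine (tendsto_energy_complex h1 h2 (fun h => hne (congrArg e h))).congr' ?_
  filter_upwards [self_mem_nhdsWithin] with ρ hρ
  have hρ : 0 < ρ := hρ
  congr 2
  rw [← he.setIntegral_preimage_emb e.toHomeomorph.measurableEmbedding]
  have hpre : e ⁻¹' (Metric.ball (0 : E2) 1 \ (Metric.ball (e p) ρ ∪ Metric.ball (e q) ρ)) =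
      Metric.ball (0 : ℂ) 1 \ (Metric.ball p ρ ∪ Metric.ball q ρ) := by
    ext z; simp [dist_eq_norm]
  rw [hpre]
  refine setIntegral_congr_fun (by measurability) fun z hz => ?_
  have hzp : z ≠ p := by rintro rfl; exact hz.2 (Or.inl (Metric.mem_ball_self hρ))
  have hzq : z ≠ q := by rintro rfl; exact hz.2 (Or.inr (Metric.mem_ball_self hρ))
  rw [norm_sq_fderiv_log_add_log (e.injective.ne hzp) (e.injective.ne hzq), crossKernel_re]
  simp only [← map_sub, e.norm_map, e.inner_map_map]
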